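/- For every real number x and every real t with |t| < π/2, the series Σ_{n≥1} D^{(1,0,∅,0)}_{2n−1}(x) · t^{2n−1}/(2n−1)! converges and its sum equals x·(sec t)^x·∫_0^t (cos z)^x dz + (1 − x)·∫_0^t (sec z)^x dz, where sec z = 1/cos z. -/

import Mathlib

/-- A permutation `σ` of `{1,…,n}` (as a permutation of `Fin n`) is up-down if
`σ_1 < σ_2 > σ_3 < σ_4 > ⋯`. -/
def UpDown {n : ℕ} (σ : Equiv.Perm (Fin n)) : Prop :=
  ∀ i : Fin n, ∀ h : i.val + 1 < n,
    if Even i.val then σ i < σ ⟨i.val + 1, h⟩ else σ ⟨i.val + 1, h⟩ < σ i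

/-- A permutation is down-up if `σ_1 > σ_2 < σ_3 > σ_4 < ⋯`. -/
def DownUp {n : ℕ} (σ : Equiv.Perm (Fin n)) : Prop :=
  ∀ i : Fin n, ∀ h : i.val + 1 < n,
    if Even i.val then σ ⟨i.val + 1, h⟩ < σ i else σ i < σ ⟨i.val + 1, h⟩

/-- `σ_i` matches `MMP(1,0,∅,0)`: there exists `j > i` with `σ_j > σ_i` and
there is no `j < i` with `σ_j < σ_i`. -/
def Matches1 {n : ℕ} (σ : Equiv.Perm (Fin n)) (i : Fin n) : Prop :=
  (∃ j, i < j ∧ σ i < σ j) ∧ ¬ ∃ j, j < i ∧ σ j < σ i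

/-- `mmp^{(1,0,∅,0)}(σ)`: the number of indices matching `MMP(1,0,∅,0)` in `σ`. -/
noncomputable def mmp1 {n : ℕ} (σ : Equiv.Perm (Fin n)) : ℕ :=
  {i : Fin n | Matches1 σ i}.ncard

open scoped Classical in
/-- `D^{(1,0,∅,0)}_{2n+1}(x) = Σ_{σ ∈ DU_{2n+1}} x^{mmp^{(1,0,∅,0)}(σ)}`. -/
noncomputable def Dpoly (n : ℕ) (x : ℝ) : ℝ :=
  ∑ σ : Equiv.Perm (Fin (2*n+1)), if DownUp σ then x ^ mmp1 σ else 0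

/-! Split an alternating word at its minimum `m`, as `l₁ ++ m :: l₂`: the two parts alternate
independently, and the left-to-right minima of the word are `m` and those of `l₁`. Counting
alternating words by left-to-right minima therefore gives binomial convolution recurrences, which
are the Leibniz rule at `0` for the linear equations `f' = c + x f tan` with `c = 0`, `f 0 = 1`
and with `c = x`, `f 0 = 0`. Their solutions are `(sec z)^x` and `x (sec z)^x ∫_0^z (cos s)^x ds`.

In a down-up word of odd length every left-to-right minimum matches `MMP(1,0,∅,0)`, except that
the first letter does not match when it is the maximum. Such words are a maximum followed by an
up-down word of even length, so this correction contributes `(1 - x) ∫_0^z (sec s)^x ds`. The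
resulting function is holomorphic on `|z| < π/2` and equals the sum of its Taylor series there. -/

open Finset

section Lists

variable {α : Type*} [LinearOrder α]

/-- The words `a₁ a₂ … a_k` whose consecutive comparisons alternate, beginning with a descent if
`d = true` and with an ascent if `d = false`, where the last letter counts as followed by a descent
(to a virtual letter `-∞`). Hence `k` is odd if `d = true` and even if `d = false`. -/
def Zigzag : Bool → List α → Prop
  | d, [] => d = false
  | d, [_] => d = true
  | d, a :: b :: l => (if d then b < a else a < b) ∧ Zigzag (!d) (b :: l)

/-- The number of left-to-right minima of a word that are smaller than the bound `b`; all
left-to-right minima are counted when `b = ⊤`. -/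
def lrMinBelow : WithTop α → List α → ℕ
  | _, [] => 0
  | b, a :: l => if (a : WithTop α) < b then lrMinBelow a l + 1 else lrMinBelow b l

theorem Zigzag.even_length_iff {d : Bool} {l : List α} (h : Zigzag d l) :
    Even l.length ↔ d = false := by
  induction l generalizing d with
  | nil => simpa [Zigzag] using h
  | cons a l ih =>
    cases l with
    | nil => simpa [Zigzag] using h
    | cons b l => rw [List.length_cons, Nat.even_add_one, ih h.2]; simp

theorem zigzag_true_max_cons {M : α} {l : List α} (hl : ∀ y ∈ l, y < M) :
    Zigzag true (M :: l) ↔ Zigzag false l := by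
  cases l with
  | nil => simp [Zigzag]
  | cons b l => simp [Zigzag, hl b]

theorem zigzag_append_min_cons {m : α} {l₁ l₂ : List α} (h₁ : ∀ y ∈ l₁, m < y)
    (h₂ : ∀ y ∈ l₂, m < y) (d : Bool) :
    Zigzag d (l₁ ++ m :: l₂) ↔
      (d = true ∧ l₁ = [] ∧ l₂ = []) ∨ (Zigzag d l₁ ∧ Zigzag true l₂) := by
  induction l₁ generalizing d with
  | nil =>
    cases l₂ with
    | nil => simp [Zigzag]
    | cons b l => cases d <;> simp [Zigzag, h₂ b, (h₂ b List.mem_cons_self).le]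
  | cons a l ih =>
    have hma : m < a := h₁ a List.mem_cons_self
    have ih := ih (fun y hy => h₁ y (List.mem_cons_of_mem a hy)) (!d)
    cases l with
    | nil => cases d <;> simp_all [Zigzag, hma.le]
    | cons b l => simp_all [Zigzag, and_assoc]

theorem lrMinBelow_eq_zero {b : WithTop α} {l : List α} (h : ∀ y ∈ l, b ≤ y) :
    lrMinBelow b l = 0 := by
  induction l with
  | nil => rfl
  | cons a l ih =>
    rw [lrMinBelow, if_neg (h a List.mem_cons_self).not_gt,
      ih fun y hy => h y (List.mem_cons_of_mem a hy)]

theorem lrMinBelow_eq_top {b : WithTop α} {l : List α} (h : ∀ y ∈ l, y < b) :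
    lrMinBelow b l = lrMinBelow ⊤ l := by
  cases l with
  | nil => rfl
  | cons a l => simp [lrMinBelow, h a]

theorem lrMinBelow_top_max_cons {M : α} {l : List α} (hl : ∀ y ∈ l, y < M) :
    lrMinBelow ⊤ (M :: l) = lrMinBelow ⊤ l + 1 := by
  rw [lrMinBelow, if_pos (WithTop.coe_lt_top M),
    lrMinBelow_eq_top fun y hy => WithTop.coe_lt_coe.2 (hl y hy)]

theorem lrMinBelow_append_min_cons {m : α} {l₁ l₂ : List α} (h₁ : ∀ y ∈ l₁, m < y)
    (h₂ : ∀ y ∈ l₂, m < y) {b : WithTop α} (hb : m < b) :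
    lrMinBelow b (l₁ ++ m :: l₂) = lrMinBelow b l₁ + 1 := by
  induction l₁ generalizing b with
  | nil =>
    simp [lrMinBelow, hb, lrMinBelow_eq_zero fun y hy => WithTop.coe_le_coe.2 (h₂ y hy).le]
  | cons a l ih =>
    rw [List.forall_mem_cons] at h₁
    rw [List.cons_append, lrMinBelow, lrMinBelow, ih h₁.2 (WithTop.coe_lt_coe.2 h₁.1), ih h₁.2 hb]
    split_ifs <;> rfl

end Lists

section Arrangements

variable {α : Type*}

/-- The words in which every element of `S` occurs exactly once, and no other letter occurs. -/
def arrangements [DecidableEq α] (S : Finset α) : Finset (List α) :=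
  ⟨S.val.lists, Multiset.lists_nodup_finset S⟩

variable [DecidableEq α]

theorem mem_arrangements_iff_val_eq {S : Finset α} {l : List α} :
    l ∈ arrangements S ↔ S.val = (l : Multiset α) :=
  Multiset.mem_lists_iff _ _

theorem mem_arrangements {S : Finset α} {l : List α} :
    l ∈ arrangements S ↔ l.Nodup ∧ ∀ a, a ∈ l ↔ a ∈ S := by
  rw [mem_arrangements_iff_val_eq]
  constructor
  · intro h
    exact ⟨Multiset.coe_nodup.1 (h ▸ S.nodup), fun a => by rw [← mem_val, h, Multiset.mem_coe]⟩
  · rintro ⟨hl, hS⟩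
    exact (Multiset.Nodup.ext S.nodup (Multiset.coe_nodup.2 hl)).2 fun a => (hS a).symm

theorem length_of_mem_arrangements {S : Finset α} {l : List α} (h : l ∈ arrangements S) :
    l.length = #S := by
  rw [card_def, mem_arrangements_iff_val_eq.1 h, Multiset.coe_card]

theorem arrangements_empty : arrangements (∅ : Finset α) = {[]} := by
  ext l
  rw [mem_arrangements_iff_val_eq, mem_singleton, empty_val, eq_comm, Multiset.coe_eq_zero]

theorem append_cons_mem_arrangements {S T : Finset α} {m : α} {l₁ l₂ : List α} (hm : m ∉ S)
    (hT : T ⊆ S) (h₁ : l₁ ∈ arrangements T) (h₂ : l₂ ∈ arrangements (S \ T)) :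
    l₁ ++ m :: l₂ ∈ arrangements (insert m S) := by
  rw [mem_arrangements] at *
  grind

theorem exists_append_cons_of_mem_arrangements {S : Finset α} {m : α} {l : List α} (hm : m ∉ S)
    (h : l ∈ arrangements (insert m S)) :
    ∃ T ⊆ S, ∃ l₁ ∈ arrangements T, ∃ l₂ ∈ arrangements (S \ T), l₁ ++ m :: l₂ = l := by
  rw [mem_arrangements] at h
  obtain ⟨l₁, l₂, rfl⟩ := List.append_of_mem ((h.2 m).2 (mem_insert_self m S))
  simp only [List.nodup_cons, List.nodup_append, List.mem_append, List.mem_cons, mem_insert] at h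
  refine ⟨l₁.toFinset, fun a ha => ?_, l₁, ?_, l₂, ?_, rfl⟩ <;>
    grind [mem_arrangements, List.mem_toFinset]

theorem sum_arrangements_insert {M : Type*} [AddCommMonoid M] {S : Finset α} {m : α} (hm : m ∉ S)
    (w : List α → M) :
    ∑ l ∈ arrangements (insert m S), w l =
      ∑ T ∈ S.powerset, ∑ l₁ ∈ arrangements T, ∑ l₂ ∈ arrangements (S \ T), w (l₁ ++ m :: l₂) := by
  simp_rw [← sum_product']
  rw [sum_sigma']
  symm
  refine sum_bij (fun p _ => p.2.1 ++ m :: p.2.2) ?_ ?_ ?_ fun _ _ => rfl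
  · rintro ⟨T, l₁, l₂⟩ h
    simp only [mem_sigma, mem_powerset, mem_product] at h
    exact append_cons_mem_arrangements hm h.1 h.2.1 h.2.2
  · rintro ⟨T, l₁, l₂⟩ h ⟨T', l₁', l₂'⟩ h' heq
    simp only [mem_sigma, mem_powerset, mem_product, mem_arrangements] at h h' heq
    obtain ⟨rfl, -, rfl⟩ := (List.append_cons_inj_of_notMem (by grind) (by grind)).1 heq
    obtain rfl : T = T' := by grind
    rfl
  · intro l hl
    obtain ⟨T, hT, l₁, h₁, l₂, h₂, rfl⟩ := exists_append_cons_of_mem_arrangements hm hl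
    exact ⟨⟨T, l₁, l₂⟩, by simp [hT, h₁, h₂], rfl⟩

theorem sum_arrangements_ite_head {M : Type*} [AddCommMonoid M] {S : Finset α} {m : α} (hm : m ∈ S)
    (w : List α → M) :
    (∑ l ∈ arrangements S, if l.head? = some m then w l.tail else 0) =
      ∑ l ∈ arrangements (S.erase m), w l := by
  rw [← sum_filter]
  refine sum_nbij' List.tail (m :: ·) ?_ ?_ ?_ ?_ fun _ _ => rfl
  · rintro (_ | ⟨a, l⟩) h <;> grind [mem_arrangements]
  · grind [mem_arrangements]
  · rintro (_ | ⟨a, l⟩) h <;> grind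
  · simp

theorem sum_arrangements_univ {M : Type*} [AddCommMonoid M] {n : ℕ} (w : List (Fin n) → M) :
    ∑ l ∈ arrangements univ, w l = ∑ σ : Equiv.Perm (Fin n), w (List.ofFn σ) := by
  symm
  refine sum_bij (fun σ _ => List.ofFn σ) ?_ ?_ ?_ fun _ _ => rfl
  · intro σ _
    exact mem_arrangements.2
      ⟨List.nodup_ofFn.2 σ.injective, fun a => by simpa using σ.surjective a⟩
  · intro σ _ τ _ h
    exact DFunLike.coe_injective (List.ofFn_injective h)
  · intro l hl
    have hlen : n = l.length := by simpa using (length_of_mem_arrangements hl).symm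
    obtain ⟨hnodup, hmem⟩ := mem_arrangements.1 hl
    refine ⟨(finCongr hlen).trans (hnodup.getEquivOfForallMemList l fun a => by simp [hmem]),
      mem_univ _, List.ext_getElem (by simp [hlen]) fun i _ _ => ?_⟩
    simp

end Arrangements

section ZigzagSums

variable {α R : Type*} [LinearOrder α] [CommSemiring R]

open scoped Classical in
/-- The weight `x ^ k` of a zigzag word with `k` left-to-right minima; other words have weight
zero. -/
noncomputable def zigzagWeight (d : Bool) (x : R) (l : List α) : R :=
  if Zigzag d l then x ^ lrMinBelow ⊤ l else 0

/-- The generating polynomial, by number of left-to-right minima, of the zigzag arrangements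
of `S`. -/
noncomputable def zigzagSum (d : Bool) (x : R) (S : Finset α) : R :=
  ∑ l ∈ arrangements S, zigzagWeight d x l

theorem zigzagWeight_append_min_cons {m : α} {l₁ l₂ : List α} (h₁ : ∀ y ∈ l₁, m < y)
    (h₂ : ∀ y ∈ l₂, m < y) (d : Bool) (x : R) :
    zigzagWeight d x (l₁ ++ m :: l₂) = (if d = true ∧ l₁ = [] ∧ l₂ = [] then x else 0) +
      x * (zigzagWeight d x l₁ * zigzagWeight true 1 l₂) := by
  have hzigzag := zigzag_append_min_cons h₁ h₂ d
  have hmin := lrMinBelow_append_min_cons h₁ h₂ (WithTop.coe_lt_top m)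
  by_cases hnil : d = true ∧ l₁ = [] ∧ l₂ = []
  · obtain ⟨rfl, rfl, rfl⟩ := hnil
    simp [zigzagWeight, Zigzag, lrMinBelow]
  · rw [or_iff_right hnil] at hzigzag
    by_cases hd : Zigzag d l₁ <;> by_cases ht : Zigzag true l₂ <;>
      simp [zigzagWeight, hnil, hzigzag, hmin, hd, ht, pow_succ']

theorem zigzagSum_empty (d : Bool) (x : R) :
    zigzagSum d x (∅ : Finset α) = if d = true then 0 else 1 := by
  cases d <;> simp [zigzagSum, arrangements_empty, zigzagWeight, Zigzag, lrMinBelow]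

theorem zigzagSum_eq_zero {d : Bool} {S : Finset α} (h : ¬(Even #S ↔ d = false)) (x : R) :
    zigzagSum d x S = 0 :=
  sum_eq_zero fun _ hl => if_neg fun hz =>
    h (length_of_mem_arrangements hl ▸ hz.even_length_iff)

theorem zigzagSum_insert_min {S : Finset α} {m : α} (hm : ∀ y ∈ S, m < y) (d : Bool) (x : R) :
    zigzagSum d x (insert m S) = (if d = true ∧ S = ∅ then x else 0) +
      x * ∑ T ∈ S.powerset, zigzagSum d x T * zigzagSum true 1 (S \ T) := by
  have hconst : ∑ T ∈ S.powerset, ∑ l₁ ∈ arrangements T, ∑ l₂ ∈ arrangements (S \ T),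
      (if d = true ∧ l₁ = [] ∧ l₂ = [] then x else 0) = if d = true ∧ S = ∅ then x else 0 := by
    obtain rfl | hS := S.eq_empty_or_nonempty
    · simp [arrangements_empty]
    · rw [if_neg (by simp [hS.ne_empty])]
      refine sum_eq_zero fun T _ => sum_eq_zero fun l₁ h₁ => sum_eq_zero fun l₂ h₂ => if_neg ?_
      rintro ⟨-, rfl, rfl⟩
      obtain ⟨a, ha⟩ := hS
      have := (mem_arrangements.1 h₁).2 a
      have := (mem_arrangements.1 h₂).2 a
      grind
  rw [zigzagSum, sum_arrangements_insert fun h => (hm m h).false, ← hconst, mul_sum,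
    ← sum_add_distrib]
  refine sum_congr rfl fun T hT => ?_
  rw [zigzagSum, zigzagSum, sum_mul_sum, mul_sum, ← sum_add_distrib]
  refine sum_congr rfl fun l₁ h₁ => ?_
  rw [mul_sum, ← sum_add_distrib]
  refine sum_congr rfl fun l₂ h₂ => zigzagWeight_append_min_cons (fun y hy => hm y ?_)
    (fun y hy => hm y ?_) d x
  · exact mem_powerset.1 hT (((mem_arrangements.1 h₁).2 y).1 hy)
  · exact (mem_sdiff.1 (((mem_arrangements.1 h₂).2 y).1 hy)).1

theorem zigzagSum_eq_of_recurrence {d : Bool} {x : R} {a b : ℕ → R}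
    (ha_zero : a 0 = if d = true then 0 else 1)
    (ha_succ : ∀ n, a (n + 1) = (if d = true ∧ n = 0 then x else 0) +
      x * ∑ k ∈ range (n + 1), (n.choose k : R) * (a k * b (n - k)))
    (S : Finset α) (hb : ∀ T ⊂ S, zigzagSum true 1 T = b #T) :
    zigzagSum d x S = a #S := by
  induction S using Finset.strongInduction with
  | H S ih =>
    obtain rfl | hS := S.eq_empty_or_nonempty
    · rw [zigzagSum_empty, card_empty, ha_zero]
    · obtain ⟨m, U, hm, rfl⟩ : ∃ m U, (∀ y ∈ U, m < y) ∧ insert m U = S :=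
        ⟨S.min' hS, S.erase (S.min' hS), fun y hy => S.min'_lt_of_mem_erase_min' hS hy,
          insert_erase (S.min'_mem hS)⟩
      have hmU : m ∉ U := fun h => (hm m h).false
      have hU : U ⊂ insert m U := ssubset_insert hmU
      have hterm : ∀ T ∈ U.powerset, zigzagSum d x T * zigzagSum true 1 (U \ T) =
          a #T * b (#U - #T) := by
        intro T hT
        rw [mem_powerset] at hT
        rw [ih T (hT.trans_ssubset hU) fun V hV => hb V (hV.trans (hT.trans_ssubset hU)),
          hb _ (sdiff_subset.trans_ssubset hU), card_sdiff_of_subset hT]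
      simp only [zigzagSum_insert_min hm, sum_congr rfl hterm,
        sum_powerset_apply_card (fun k => a k * b (#U - k)), card_insert_of_notMem hmU, ha_succ,
        nsmul_eq_mul, card_eq_zero]

end ZigzagSums

section Permutations

variable {α : Type*} [LinearOrder α]

theorem zigzag_iff_getElem {d : Bool} {l : List α} :
    Zigzag d l ↔ (Even l.length ↔ d = false) ∧ ∀ (i : ℕ) (h : i + 1 < l.length),
      if Even i ↔ d = true then l[i + 1] < l[i] else l[i] < l[i + 1] := by
  induction l generalizing d with
  | nil => simp [Zigzag]
  | cons a l ih =>
    cases l with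
    | nil => simp [Zigzag]
    | cons b l =>
      rw [Zigzag, ih, ← Nat.and_forall_add_one (p := fun i => ∀ h : i + 1 < (a :: b :: l).length,
        if Even i ↔ d = true then (a :: b :: l)[i + 1] < (a :: b :: l)[i]
        else (a :: b :: l)[i] < (a :: b :: l)[i + 1])]
      cases d <;> simp [Nat.even_add_one, and_left_comm]

theorem lrMinBelow_ofFn {n : ℕ} (b : WithTop α) (g : Fin n → α) :
    lrMinBelow b (List.ofFn g) = #{i | (g i : WithTop α) < b ∧ ∀ j < i, g i < g j} := by
  induction n generalizing b with
  | zero => simp [lrMinBelow]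
  | succ n ih =>
    rw [List.ofFn_succ, lrMinBelow, Fin.card_filter_univ_succ]
    simp only [ih, Fin.forall_fin_succ, Fin.succ_lt_succ_iff]
    by_cases h₀ : (g 0 : WithTop α) < b
    · simp only [h₀, if_true, WithTop.coe_lt_coe, Fin.not_lt_zero, IsEmpty.forall_iff, implies_true,
        and_self, Fin.succ_pos, forall_const, add_left_inj]
      refine congrArg card (filter_congr fun i _ => ?_)
      have : g i.succ < g 0 → (g i.succ : WithTop α) < b :=
        fun h => (WithTop.coe_lt_coe.2 h).trans h₀
      tauto
    · simp only [h₀, if_false, false_and, Fin.succ_pos, forall_const]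
      refine congrArg card (filter_congr fun i _ => ?_)
      have : (g i.succ : WithTop α) < b → g i.succ < g 0 :=
        fun h => WithTop.coe_lt_coe.1 (h.trans_le (not_lt.1 h₀))
      tauto

theorem downUp_iff_zigzag {n : ℕ} (hn : ¬Even n) (σ : Equiv.Perm (Fin n)) :
    DownUp σ ↔ Zigzag true (List.ofFn σ) := by
  simp only [zigzag_iff_getElem, DownUp, List.length_ofFn, List.getElem_ofFn, hn, Fin.forall_iff,
    iff_true]
  exact ⟨fun h => ⟨by simp, fun i hi => h i _ hi⟩, fun h i _ hi => h.2 i hi⟩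

theorem matches1_zero_iff {n : ℕ} {σ : Equiv.Perm (Fin (n + 1))} :
    Matches1 σ 0 ↔ σ 0 ≠ Fin.last n := by
  simp only [Matches1, Fin.not_lt_zero, false_and, exists_false, not_false_eq_true, and_true]
  constructor
  · rintro ⟨j, -, hj⟩
    exact (hj.trans_le (Fin.le_last _)).ne
  · intro h
    refine ⟨σ.symm (Fin.last n), Fin.pos_iff_ne_zero.2 fun h₀ => h ?_, ?_⟩
    · rw [← h₀, σ.apply_symm_apply]
    · rw [σ.apply_symm_apply]
      exact Fin.lt_last_iff_ne_last.2 h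

theorem DownUp.matches1_succ_iff {n : ℕ} {σ : Equiv.Perm (Fin (n + 1))} (hσ : DownUp σ)
    (hn : Even n) (i : Fin n) : Matches1 σ i.succ ↔ ∀ j < i.succ, σ i.succ < σ j := by
  constructor
  · intro h j hj
    exact lt_of_le_of_ne (not_lt.1 fun hlt => h.2 ⟨j, hj, hlt⟩) (σ.injective.ne hj.ne')
  · intro hmin
    have hi : Even i.val := by
      by_contra hi
      have hascent := hσ i.castSucc i.succ.isLt
      rw [if_neg (by simpa using hi)] at hascent
      exact (hmin i.castSucc i.castSucc_lt_succ).not_gt hascent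
    have hlt : i.succ.val + 1 < n + 1 := by
      rw [Fin.val_succ]
      grind
    have hascent := hσ i.succ hlt
    rw [if_neg (by simpa [Nat.even_add_one] using hi)] at hascent
    exact ⟨⟨_, Nat.lt_succ_self _, hascent⟩, fun ⟨j, hj, hlt⟩ => (hmin j hj).not_gt hlt⟩

theorem DownUp.mmp1_add_ite {n : ℕ} {σ : Equiv.Perm (Fin (n + 1))} (hσ : DownUp σ) (hn : Even n) :
    mmp1 σ + (if σ 0 = Fin.last n then 1 else 0) = lrMinBelow ⊤ (List.ofFn σ) := by
  classical
  rw [mmp1, Set.ncard_eq_toFinset_card', Set.toFinset_ofPred, lrMinBelow_ofFn,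
    Fin.card_filter_univ_succ, Fin.card_filter_univ_succ]
  simp only [matches1_zero_iff, hσ.matches1_succ_iff hn, WithTop.coe_lt_top, Fin.not_lt_zero,
    IsEmpty.forall_iff, implies_true, true_and, and_self, if_true]
  split_ifs <;> simp_all

open scoped Classical in
/-- The polynomial `D_n^{(1,0,∅,0)}(x)` for words of any length `n`, evaluated at an element `x` of
any semiring. -/
noncomputable def downUpSum {R : Type*} [CommSemiring R] (n : ℕ) (x : R) : R :=
  ∑ σ : Equiv.Perm (Fin n), if DownUp σ then x ^ mmp1 σ else 0

theorem ofReal_Dpoly (n : ℕ) (x : ℝ) : (Dpoly n x : ℂ) = downUpSum (2 * n + 1) (x : ℂ) := by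
  simp only [Dpoly, downUpSum, Complex.ofReal_sum, apply_ite Complex.ofReal, Complex.ofReal_pow,
    Complex.ofReal_zero]

variable {R : Type*} [CommRing R]

-- If `σ` begins with its maximum, its first letter is a left-to-right minimum but not a match, so
-- `x ^ mmp1 σ` is the weight of the tail rather than `x` times it.
open scoped Classical in
theorem ite_downUp_pow_mmp1 {n : ℕ} (hn : Even n) (x : R) (σ : Equiv.Perm (Fin (n + 1))) :
    (if DownUp σ then x ^ mmp1 σ else 0) = zigzagWeight true x (List.ofFn σ) +
      if (List.ofFn σ).head? = some (Fin.last n) then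
        (1 - x) * zigzagWeight false x (List.ofFn σ).tail else 0 := by
  have hzigzag := downUp_iff_zigzag (Nat.not_even_iff_odd.2 hn.add_one) σ
  have hmmp (hσ : DownUp σ) := hσ.mmp1_add_ite hn
  obtain ⟨l, hl⟩ : ∃ l, List.ofFn σ = σ 0 :: l := ⟨_, List.ofFn_succ⟩
  have hnodup := List.nodup_ofFn.2 σ.injective
  rw [hl] at hzigzag hmmp hnodup ⊢
  by_cases h₀ : σ 0 = Fin.last n
  · have hmax : ∀ y ∈ l, y < Fin.last n := fun y hy =>
      Fin.lt_last_iff_ne_last.2 fun h => (List.nodup_cons.1 hnodup).1 (h₀ ▸ h ▸ hy)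
    rw [h₀, zigzag_true_max_cons hmax] at hzigzag
    have hmmp (hσ : DownUp σ) : mmp1 σ = lrMinBelow ⊤ l := by
      simpa [h₀, lrMinBelow_top_max_cons hmax] using hmmp hσ
    by_cases hσ : DownUp σ
    · simp only [h₀, zigzagWeight, zigzag_true_max_cons hmax, lrMinBelow_top_max_cons hmax,
        hzigzag.1 hσ, hmmp hσ, hσ, List.head?_cons, List.tail_cons, if_true]
      ring
    · simp [h₀, zigzagWeight, zigzag_true_max_cons hmax, mt hzigzag.2 hσ, hσ]
  · by_cases hσ : DownUp σ
    · simp [h₀, zigzagWeight, hzigzag.1 hσ, hσ, ← hmmp hσ]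
    · simp [h₀, zigzagWeight, mt hzigzag.2 hσ, hσ]

theorem downUpSum_succ {n : ℕ} (hn : Even n) (x : R) :
    downUpSum (n + 1) x = zigzagSum true x (univ : Finset (Fin (n + 1))) +
      (1 - x) * zigzagSum false x (univ.erase (Fin.last n)) := by
  simp only [downUpSum, ite_downUp_pow_mmp1 hn, sum_add_distrib]
  rw [← sum_arrangements_univ, ← sum_arrangements_univ (w := fun l =>
    if l.head? = some (Fin.last n) then (1 - x) * zigzagWeight false x l.tail else 0),
    sum_arrangements_ite_head (mem_univ _) fun l => (1 - x) * zigzagWeight false x l, ← mul_sum]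
  rfl

end Permutations

section LinearODE

open Filter Topology

theorem iteratedDeriv_succ_of_eventually_hasDerivAt {𝕜 F : Type*} [NontriviallyNormedField 𝕜]
    [NormedAddCommGroup F] [NormedSpace 𝕜 F] {f f' : 𝕜 → F} {a : 𝕜}
    (hf : ∀ᶠ z in 𝓝 a, HasDerivAt f (f' z) z) (n : ℕ) :
    iteratedDeriv (n + 1) f a = iteratedDeriv n f' a := by
  rw [iteratedDeriv_succ']
  exact EventuallyEq.iteratedDeriv_eq n (hf.mono fun z hz => hz.deriv)

theorem iteratedDeriv_succ_of_linear_ode {f g : ℂ → ℂ} {a c x : ℂ} (hg : AnalyticAt ℂ g a)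
    (hf : ∀ᶠ z in 𝓝 a, HasDerivAt f (c + x * (f z * g z)) z) (n : ℕ) :
    iteratedDeriv (n + 1) f a = (if n = 0 then c else 0) +
      x * ∑ k ∈ range (n + 1),
        (n.choose k : ℂ) * (iteratedDeriv k f a * iteratedDeriv (n - k) g a) := by
  have hfa : AnalyticAt ℂ f a := Complex.analyticAt_iff_eventually_differentiableAt.2
    (hf.mono fun z hz => hz.differentiableAt)
  rw [iteratedDeriv_succ_of_eventually_hasDerivAt hf,
    iteratedDeriv_fun_add contDiffAt_const (contDiffAt_const.mul (hfa.fun_mul hg).contDiffAt),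
    iteratedDeriv_const, iteratedDeriv_const_mul_field]
  congr 2
  exact (iteratedDeriv_mul hfa.contDiffAt hg.contDiffAt).trans (by simp only [mul_assoc])

end LinearODE

section Trigonometry

open Complex Filter Topology Metric

theorem cos_mem_slitPlane {z : ℂ} (hz : |z.re| < Real.pi / 2) : cos z ∈ slitPlane := by
  rw [abs_lt, ← Set.mem_Ioo] at hz
  left
  have hre : (cos z).re = Real.cos z.re * Real.cosh z.im := by
    simp [Complex.cos_eq z, ← ofReal_cos, ← ofReal_cosh, ← ofReal_sin, ← ofReal_sinh]
  rw [hre]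
  exact mul_pos (Real.cos_pos_of_mem_Ioo hz) (Real.cosh_pos z.im)

theorem abs_re_lt_of_mem_ball {r : ℝ} {z : ℂ} (hz : z ∈ ball 0 r) : |z.re| < r :=
  (abs_re_le_norm z).trans_lt (mem_ball_zero_iff.1 hz)

theorem hasDerivAt_tan_one_add_sq {z : ℂ} (hz : cos z ≠ 0) :
    HasDerivAt tan (1 + tan z * tan z) z := by
  convert! hasDerivAt_tan hz using 1
  rw [tan_eq_sin_div_cos]
  field_simp
  linear_combination sin_sq_add_cos_sq z

theorem hasDerivAt_cos_cpow {z : ℂ} (hz : |z.re| < Real.pi / 2) (y : ℂ) :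
    HasDerivAt (fun w => cos w ^ y) (-y * (cos z ^ y * tan z)) z := by
  have hcos := cos_mem_slitPlane hz
  have hne := slitPlane_ne_zero hcos
  convert! (hasDerivAt_cos z).cpow_const (c := y) hcos using 1
  rw [tan_eq_sin_div_cos, cpow_sub _ _ hne, cpow_one]
  field_simp

theorem hasDerivAt_wedgeIntegral_cos_cpow {z : ℂ} (hz : z ∈ ball 0 (Real.pi / 2)) (y : ℂ) :
    HasDerivAt (fun w => wedgeIntegral 0 w (fun s => cos s ^ y)) (cos z ^ y) z := by
  have hd : DifferentiableOn ℂ (fun s => cos s ^ y) (ball 0 (Real.pi / 2)) := fun s hs =>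
    (hasDerivAt_cos_cpow (abs_re_lt_of_mem_ball hs) y).differentiableAt.differentiableWithinAt
  exact hd.isConservativeOn.hasDerivAt_wedgeIntegral hd.continuousOn hz

end Trigonometry

section GeneratingFunctions

open Complex Filter Topology Metric

variable {α : Type*} [LinearOrder α]

/-- The exponential generating function of the polynomials `zigzagSum d x` of the sets of
size `0, 1, 2, …`, namely `(sec z)^x` and `x (sec z)^x ∫_0^z (cos s)^x ds`. -/
noncomputable def zigzagGenFun : Bool → ℂ → ℂ → ℂ
  | false, x => fun z => cos z ^ (-x)
  | true, x => fun z => x * cos z ^ (-x) * wedgeIntegral 0 z (fun s => cos s ^ x)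

theorem zigzagGenFun_zero (d : Bool) (x : ℂ) :
    zigzagGenFun d x 0 = if d = true then 0 else 1 := by
  cases d <;> simp [zigzagGenFun, wedgeIntegral]

theorem hasDerivAt_zigzagGenFun (d : Bool) (x : ℂ) {z : ℂ} (hz : z ∈ ball 0 (Real.pi / 2)) :
    HasDerivAt (zigzagGenFun d x)
      ((if d = true then x else 0) + x * (zigzagGenFun d x z * tan z)) z := by
  have hre := abs_re_lt_of_mem_ball hz
  have hsec : HasDerivAt (fun w => cos w ^ (-x)) (x * (cos z ^ (-x) * tan z)) z := by
    simpa using hasDerivAt_cos_cpow hre (-x)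
  cases d with
  | false => simpa [zigzagGenFun] using hsec
  | true =>
    have hinv : cos z ^ (-x) * cos z ^ x = 1 := by
      rw [← cpow_add _ _ (slitPlane_ne_zero (cos_mem_slitPlane hre)), neg_add_cancel, cpow_zero]
    convert! (hsec.const_mul x).mul (hasDerivAt_wedgeIntegral_cos_cpow hz x) using 1
    rw [if_pos rfl, zigzagGenFun]
    linear_combination -x * hinv

theorem eventually_mem_ball_pi_div_two : ∀ᶠ z : ℂ in 𝓝 0, z ∈ ball 0 (Real.pi / 2) :=
  ball_mem_nhds 0 Real.pi_div_two_pos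

theorem eventually_cos_ne_zero : ∀ᶠ z : ℂ in 𝓝 0, cos z ≠ 0 :=
  continuous_cos.continuousAt.eventually_ne (by simp)

theorem analyticAt_tan_zero : AnalyticAt ℂ tan 0 :=
  analyticAt_iff_eventually_differentiableAt.2
    (eventually_cos_ne_zero.mono fun _ hz => (hasDerivAt_tan hz).differentiableAt)

theorem zigzagSum_true_one_eq_iteratedDeriv_tan (S : Finset α) :
    zigzagSum true 1 S = iteratedDeriv #S tan 0 := by
  induction S using Finset.strongInduction with
  | H S ih =>
    have htan : ∀ᶠ z : ℂ in 𝓝 0, HasDerivAt tan (1 + 1 * (tan z * tan z)) z :=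
      eventually_cos_ne_zero.mono fun z hz => by simpa using hasDerivAt_tan_one_add_sq hz
    refine zigzagSum_eq_of_recurrence (a := fun n => iteratedDeriv n tan 0)
      (b := fun n => iteratedDeriv n tan 0) (by simp) ?_ S ih
    simpa using iteratedDeriv_succ_of_linear_ode analyticAt_tan_zero htan

theorem zigzagSum_eq_iteratedDeriv (d : Bool) (x : ℂ) (S : Finset α) :
    zigzagSum d x S = iteratedDeriv #S (zigzagGenFun d x) 0 := by
  refine zigzagSum_eq_of_recurrence (a := fun n => iteratedDeriv n (zigzagGenFun d x) 0)
    (b := fun n => iteratedDeriv n tan 0) (by simpa using zigzagGenFun_zero d x) (fun n => ?_) S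
    fun T _ => zigzagSum_true_one_eq_iteratedDeriv_tan T
  rw [iteratedDeriv_succ_of_linear_ode analyticAt_tan_zero
    (eventually_mem_ball_pi_div_two.mono fun z hz => hasDerivAt_zigzagGenFun d x hz)]
  simp only [← ite_and, and_comm]

end GeneratingFunctions

section TaylorSeries

open Complex Metric Topology
open scoped Nat

/-- The exponential generating function of the polynomials `downUpSum n x` over odd `n`. -/
noncomputable def downUpGenFun (x z : ℂ) : ℂ :=
  x * cos z ^ (-x) * wedgeIntegral 0 z (fun s => cos s ^ x) +
    (1 - x) * wedgeIntegral 0 z (fun s => cos s ^ (-x))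

theorem differentiableOn_downUpGenFun (x : ℂ) :
    DifferentiableOn ℂ (downUpGenFun x) (ball 0 (Real.pi / 2)) := fun _ hz =>
  ((hasDerivAt_zigzagGenFun true x hz).add
    ((hasDerivAt_wedgeIntegral_cos_cpow hz (-x)).const_mul (1 - x))).differentiableAt
      |>.differentiableWithinAt

theorem analyticAt_zigzagGenFun_zero (d : Bool) (x : ℂ) : AnalyticAt ℂ (zigzagGenFun d x) 0 :=
  analyticAt_iff_eventually_differentiableAt.2
    (eventually_mem_ball_pi_div_two.mono fun _ hz =>
      (hasDerivAt_zigzagGenFun d x hz).differentiableAt)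

theorem iteratedDeriv_downUpGenFun_succ (n : ℕ) (x : ℂ) :
    iteratedDeriv (n + 1) (downUpGenFun x) 0 =
      zigzagSum true x (univ : Finset (Fin (n + 1))) +
        (1 - x) * zigzagSum false x (univ.erase (Fin.last n)) := by
  have hd : ∀ᶠ z : ℂ in 𝓝 0, HasDerivAt (fun w => wedgeIntegral 0 w (fun s => cos s ^ (-x)))
      (zigzagGenFun false x z) z :=
    eventually_mem_ball_pi_div_two.mono fun z hz => hasDerivAt_wedgeIntegral_cos_cpow hz (-x)
  have hi : AnalyticAt ℂ (fun w => wedgeIntegral 0 w (fun s => cos s ^ (-x))) 0 :=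
    analyticAt_iff_eventually_differentiableAt.2 (hd.mono fun _ hz => hz.differentiableAt)
  calc iteratedDeriv (n + 1) (downUpGenFun x) 0
      = iteratedDeriv (n + 1) (zigzagGenFun true x) 0 + (1 - x) *
          iteratedDeriv (n + 1) (fun w => wedgeIntegral 0 w (fun s => cos s ^ (-x))) 0 := by
        rw [← iteratedDeriv_const_mul_field]
        exact iteratedDeriv_fun_add (analyticAt_zigzagGenFun_zero true x).contDiffAt
          (contDiffAt_const.mul hi.contDiffAt)
    _ = _ := by
        rw [iteratedDeriv_succ_of_eventually_hasDerivAt hd, zigzagSum_eq_iteratedDeriv,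
          zigzagSum_eq_iteratedDeriv, card_erase_of_mem (mem_univ _), card_univ, Fintype.card_fin,
          Nat.add_sub_cancel]

theorem iteratedDeriv_downUpGenFun_of_odd {n : ℕ} (hn : Odd n) (x : ℂ) :
    iteratedDeriv n (downUpGenFun x) 0 = downUpSum n x := by
  obtain ⟨k, rfl⟩ := hn
  rw [iteratedDeriv_downUpGenFun_succ, downUpSum_succ (even_two_mul k)]

theorem iteratedDeriv_downUpGenFun_of_even {n : ℕ} (hn : Even n) (x : ℂ) :
    iteratedDeriv n (downUpGenFun x) 0 = 0 := by
  cases n with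
  | zero => simp [downUpGenFun, wedgeIntegral]
  | succ n =>
    have hn : ¬Even n := by simpa [Nat.even_add_one] using hn
    rw [iteratedDeriv_downUpGenFun_succ, zigzagSum_eq_zero (by simp [Nat.even_add_one, hn]),
      zigzagSum_eq_zero (by simp [hn]), mul_zero, add_zero]

theorem stmt4_general (x z : ℂ) (hz : ‖z‖ < Real.pi / 2) :
    HasSum (fun n : ℕ => downUpSum (2 * n + 1) x * z ^ (2 * n + 1) / (2 * n + 1)!)
      (x * cos z ^ (-x) * wedgeIntegral 0 z (fun s => cos s ^ x) +
        (1 - x) * wedgeIntegral 0 z (fun s => cos s ^ (-x))) := by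
  change HasSum _ (downUpGenFun x z)
  have htaylor := hasSum_taylorSeries_on_ball (differentiableOn_downUpGenFun x)
    (mem_ball_zero_iff.2 hz)
  have hinj : Function.Injective fun n : ℕ => 2 * n + 1 := fun m n h => by simpa using h
  rw [← hinj.hasSum_iff] at htaylor
  · convert! htaylor using 2 with n
    simp only [Function.comp_apply, iteratedDeriv_downUpGenFun_of_odd (odd_two_mul_add_one n),
      sub_zero, smul_eq_mul]
    ring
  · intro n hn
    have hn : Even n := by
      by_contra hodd
      obtain ⟨k, rfl⟩ := Nat.not_even_iff_odd.1 hodd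
      exact hn ⟨k, rfl⟩
    rw [iteratedDeriv_downUpGenFun_of_even hn, smul_zero, smul_zero]

theorem wedgeIntegral_zero_ofReal (f : ℂ → ℂ) (t : ℝ) :
    wedgeIntegral 0 t f = ∫ s in (0 : ℝ)..t, f s := by
  simp [wedgeIntegral]

theorem ofReal_cos_rpow {t : ℝ} (ht : |t| < Real.pi / 2) (y : ℝ) :
    ((Real.cos t ^ y : ℝ) : ℂ) = cos t ^ (y : ℂ) := by
  rw [abs_lt] at ht
  rw [ofReal_cpow (Real.cos_pos_of_mem_Ioo ht).le, ofReal_cos]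

theorem ofReal_integral_cos_rpow {t : ℝ} (ht : |t| < Real.pi / 2) (y : ℝ) :
    ((∫ s in (0 : ℝ)..t, Real.cos s ^ y : ℝ) : ℂ) =
      wedgeIntegral 0 t (fun s => cos s ^ (y : ℂ)) := by
  rw [wedgeIntegral_zero_ofReal, ← intervalIntegral.integral_ofReal]
  refine intervalIntegral.integral_congr fun s hs => ofReal_cos_rpow (lt_of_le_of_lt ?_ ht) y
  simpa using Set.abs_sub_left_of_mem_uIcc hs

end TaylorSeries

/-- `Σ_{n≥1} D^{(1,0,∅,0)}_{2n−1}(x) t^{2n−1}/(2n−1)!` converges to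
`x (sec t)^x ∫_0^t (cos z)^x dz + (1−x) ∫_0^t (sec z)^x dz`. -/
theorem stmt4 (x t : ℝ) (ht : |t| < Real.pi / 2) :
    HasSum (fun n : ℕ => Dpoly n x * t ^ (2*n+1) / (Nat.factorial (2*n+1) : ℝ))
      (x * ((Real.cos t)⁻¹) ^ x * (∫ z in (0:ℝ)..t, (Real.cos z) ^ x)
        + (1 - x) * ∫ z in (0:ℝ)..t, ((Real.cos z)⁻¹) ^ x) := by
  rw [← Complex.hasSum_ofReal]
  simpa [← Real.rpow_neg_eq_inv_rpow, ofReal_Dpoly, ofReal_cos_rpow ht,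
    ofReal_integral_cos_rpow ht] using stmt4_general x t (by simpa using ht)
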